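/- arXiv:2207.14791 — 2 statements merged into one kernel-verified Lean document; each statement's English description precedes it below -/
import Mathlib

section
/- Let γ be Gamma-distributed with shape m > 0 and mean γ̄ > 0, and let α > 0. Then ∫₀^∞ Q²(√(2αγ)) f_γ(γ) dγ = (1/4) I_{m/(m+αγ̄)}(m, 1/2) − R₂, where R₂ = (b^m/(4π)) ∫₀^∞ I_{1/(b+2+p)}(1/2, m) / (√p (1+p)(b+1+p)^m) dp with b = m/(αγ̄). -/
open MeasureTheory Real Set

noncomputable def gaussQ (z : ℝ) : ℝ :=
  (Real.sqrt (2 * Real.pi))⁻¹ * ∫ t in Set.Ioi z, Real.exp (-t ^ 2 / 2)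

noncomputable def incBeta (x a b : ℝ) : ℝ :=
  ∫ t in (0:ℝ)..x, t ^ (a - 1) * (1 - t) ^ (b - 1)

noncomputable def regIncBeta (x a b : ℝ) : ℝ := incBeta x a b / incBeta 1 a b

noncomputable def nakagamiPdf (m γbar γ : ℝ) : ℝ :=
  (m / γbar) ^ m * γ ^ (m - 1) * Real.exp (-m * γ / γbar) / Real.Gamma m

/-!
Write `F` for the distribution function of the Gamma law of shape `1/2` and rate `α`. Since the
square of a Gaussian is Gamma distributed, `2 Q(√(2αγ)) = 1 - F γ`, and the Nakagami density is the
Gamma density of shape `m` and rate `c = m/γ̄`. Expand `(1 - F)² = (1 - F) - (1 - F) F`.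

The mean of `F` over a Gamma law is the probability that one Gamma variable is below an independent
one, hence a regularized incomplete beta function; this settles the first term. For the second,
Craig's formula writes `1 - F x` as a mixture of exponentials `exp (-α (1 + p) x)`. Against such an
exponential the Gamma law of rate `c` becomes, up to a factor, the one of rate `c + α (1 + p)`, so
the inner integral is again a mean of `F`. All of this works for every shape `s ∈ (0, 1)` of `F`.
-/

open ProbabilityTheory

section SwapIntegrals

variable {X Y : Type*} [MeasurableSpace X] [MeasurableSpace Y] {μ : Measure X} {ν : Measure Y}
  [SFinite μ] [SFinite ν]

lemma integral_mul_integral_swap_of_nonneg {g : X → ℝ} {k : X → Y → ℝ}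
    (hg : AEStronglyMeasurable g μ) (hk : AEStronglyMeasurable (Function.uncurry k) (μ.prod ν))
    (hk_nonneg : ∀ᵐ x ∂μ, 0 ≤ᵐ[ν] k x) (hk_int : ∀ᵐ x ∂μ, Integrable (k x) ν)
    (hgk : Integrable (fun x ↦ g x * ∫ y, k x y ∂ν) μ) :
    ∫ x, g x * ∫ y, k x y ∂ν ∂μ = ∫ y, ∫ x, g x * k x y ∂μ ∂ν := by
  have hprod : Integrable (Function.uncurry fun x y ↦ g x * k x y) (μ.prod ν) := by
    have hmeas : AEStronglyMeasurable (Function.uncurry fun x y ↦ g x * k x y) (μ.prod ν) :=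
      hg.comp_fst.mul hk
    refine (integrable_prod_iff hmeas).2
      ⟨hk_int.mono fun x hx ↦ hx.const_mul (g x), hgk.norm.congr ?_⟩
    filter_upwards [hk_nonneg] with x hx
    simp only [Function.uncurry_apply_pair, norm_mul]
    rw [integral_const_mul, Real.norm_of_nonneg (integral_nonneg_of_ae hx)]
    congr 1
    exact integral_congr_ae (hx.mono fun y hy ↦ (Real.norm_of_nonneg hy).symm)
  simp_rw [← integral_const_mul]
  exact integral_integral_swap hprod

end SwapIntegrals

section IncompleteBeta

variable {a b : ℝ}

lemma ofReal_rpow_mul_one_sub_rpow {t : ℝ} (ht : t ∈ Icc 0 1) :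
    ((t ^ (a - 1) * (1 - t) ^ (b - 1) : ℝ) : ℂ) =
      (t : ℂ) ^ ((a : ℂ) - 1) * (1 - (t : ℂ)) ^ ((b : ℂ) - 1) := by
  rw [Complex.ofReal_mul, Complex.ofReal_cpow ht.1, Complex.ofReal_cpow (sub_nonneg.2 ht.2)]
  push_cast
  rfl

lemma intervalIntegrable_rpow_mul_one_sub_rpow (ha : 0 < a) (hb : 0 < b) :
    IntervalIntegrable (fun t : ℝ ↦ t ^ (a - 1) * (1 - t) ^ (b - 1)) volume 0 1 := by
  have hcomplex := (Complex.betaIntegral_convergent (u := a) (v := b) (by simpa) (by simpa)).1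
  refine (intervalIntegrable_iff_integrableOn_Ioc_of_le zero_le_one).2
    (IntegrableOn.congr_fun hcomplex.re (fun t ht ↦ ?_) measurableSet_Ioc)
  simp only [← ofReal_rpow_mul_one_sub_rpow (Ioc_subset_Icc_self ht), RCLike.re_to_complex,
    Complex.ofReal_re]

lemma incBeta_one (ha : 0 < a) (hb : 0 < b) : incBeta 1 a b = beta a b := by
  have hcongr : EqOn (fun t : ℝ ↦ (t : ℂ) ^ ((a : ℂ) - 1) * (1 - (t : ℂ)) ^ ((b : ℂ) - 1))
      (fun t ↦ ((t ^ (a - 1) * (1 - t) ^ (b - 1) : ℝ) : ℂ)) (uIcc 0 1) := by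
    intro t ht
    rw [uIcc_of_le zero_le_one] at ht
    exact (ofReal_rpow_mul_one_sub_rpow ht).symm
  rw [beta_eq_betaIntegralReal a b ha hb, Complex.betaIntegral,
    intervalIntegral.integral_congr hcongr, intervalIntegral.integral_ofReal, Complex.ofReal_re,
    incBeta]

lemma incBeta_add_incBeta_one_sub (ha : 0 < a) (hb : 0 < b) {x : ℝ} (hx : x ∈ Icc 0 1) :
    incBeta x a b + incBeta (1 - x) b a = beta a b := by
  have hreflect : incBeta (1 - x) b a = ∫ t in x..1, t ^ (a - 1) * (1 - t) ^ (b - 1) := by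
    have := intervalIntegral.integral_comp_sub_left (a := x) (b := 1)
      (fun t : ℝ ↦ t ^ (b - 1) * (1 - t) ^ (a - 1)) 1
    simpa only [incBeta, sub_self, sub_sub_cancel, mul_comm] using this.symm
  have hint := intervalIntegrable_rpow_mul_one_sub_rpow ha hb
  have hx' : x ∈ uIcc 0 1 := by rwa [uIcc_of_le zero_le_one]
  rw [hreflect, ← incBeta_one ha hb, incBeta, incBeta]
  exact intervalIntegral.integral_add_adjacent_intervals
    (hint.mono_set (uIcc_subset_uIcc_left hx')) (hint.mono_set (uIcc_subset_uIcc_right hx'))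

lemma regIncBeta_one_sub (ha : 0 < a) (hb : 0 < b) {x : ℝ} (hx : x ∈ Icc 0 1) :
    regIncBeta (1 - x) b a = 1 - regIncBeta x a b := by
  have hcomm : beta b a = beta a b := by rw [beta, beta, mul_comm, add_comm]
  rw [regIncBeta, regIncBeta, incBeta_one ha hb, incBeta_one hb ha, hcomm,
    ← incBeta_add_incBeta_one_sub ha hb hx, eq_sub_iff_add_eq', ← add_div,
    incBeta_add_incBeta_one_sub ha hb hx, div_self (beta_pos ha hb).ne']

lemma hasDerivAt_mul_div_mul_add {r c v : ℝ} (hv : r * v + c ≠ 0) :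
    HasDerivAt (fun v ↦ r * v / (r * v + c)) (r * c / (r * v + c) ^ 2) v := by
  have hlin : HasDerivAt (fun v ↦ r * v) r v := by simpa using (hasDerivAt_id v).const_mul r
  exact (hlin.div (hlin.add_const c) hv).congr_deriv (by ring)

lemma incBeta_div_add {r c : ℝ} (hr : 0 < r) (hc : 0 < c) :
    incBeta (r / (r + c)) a b =
      r ^ a * c ^ b * ∫ v in Ioc (0 : ℝ) 1, v ^ (a - 1) / (r * v + c) ^ (a + b) := by
  have hden : ∀ v ∈ Icc (0 : ℝ) 1, 0 < r * v + c := fun v hv ↦ by have := hv.1; positivity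
  have hsubst := intervalIntegral.integral_comp_mul_deriv_of_deriv_nonneg (a := 0) (b := 1)
    (f := fun v ↦ r * v / (r * v + c)) (f' := fun v ↦ r * c / (r * v + c) ^ 2)
    (g := fun t ↦ t ^ (a - 1) * (1 - t) ^ (b - 1))
    (fun v hv ↦ (hasDerivAt_mul_div_mul_add
      (hden v (uIcc_of_le (zero_le_one' ℝ) ▸ hv)).ne').continuousAt.continuousWithinAt)
    (fun v hv ↦ hasDerivAt_mul_div_mul_add
      (hden v (Ioo_subset_Icc_self (by simpa using hv))).ne')
    (fun v _ ↦ by positivity)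
  simp only [mul_zero, zero_div, mul_one] at hsubst
  rw [incBeta, ← hsubst, intervalIntegral.integral_of_le zero_le_one, ← integral_const_mul]
  refine setIntegral_congr_fun measurableSet_Ioc fun v hv ↦ ?_
  have hv0 : 0 < v := hv.1
  have hd : 0 < r * v + c := by positivity
  have hcompl : 1 - r * v / (r * v + c) = c / (r * v + c) := by field_simp; ring
  have hpow : (r * v + c) ^ (a + b) =
      (r * v + c) ^ (a - 1) * (r * v + c) ^ (b - 1) * (r * v + c) ^ 2 := by
    rw [← rpow_natCast, ← rpow_add hd, ← rpow_add hd]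
    congr 1
    push_cast
    ring
  simp only [Function.comp_apply]
  rw [hcompl, div_rpow (by positivity) hd.le, div_rpow hc.le hd.le, mul_rpow hr.le hv0.le,
    rpow_sub_one hr.ne', rpow_sub_one hc.ne', hpow]
  field_simp

end IncompleteBeta

section GammaMeasure

variable {a r : ℝ}

lemma integrableOn_rpow_mul_exp_neg_mul (ha : 0 < a) (hr : 0 < r) :
    IntegrableOn (fun x : ℝ ↦ x ^ (a - 1) * exp (-(r * x))) (Ioi 0) := by
  simpa using integrableOn_rpow_mul_exp_neg_mul_rpow (p := 1) (s := a - 1) (b := r)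
    (by linarith) one_pos hr

lemma ae_gammaMeasure_pos : ∀ᵐ x ∂gammaMeasure a r, 0 < x := by
  refine (ae_withDensity_iff (measurable_gammaPDFReal a r).ennreal_ofReal).2 ?_
  filter_upwards [Measure.ae_ne volume 0] with x hx hpdf
  exact lt_of_le_of_ne (not_lt.1 fun hneg ↦ hpdf (gammaPDF_of_neg hneg)) hx.symm

lemma integral_gammaMeasure_eq_integral_gammaPDFReal (ha : 0 < a) (hr : 0 < r) (f : ℝ → ℝ) :
    ∫ x, f x ∂gammaMeasure a r = ∫ x in Ioi 0, gammaPDFReal a r x * f x := by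
  have hzero : ∀ x ∉ Ici (0 : ℝ), gammaPDFReal a r x * f x = 0 := fun x hx ↦ by
    rw [gammaPDFReal, if_neg (by simpa using hx), zero_mul]
  have hmeas : Measurable (gammaPDF a r) := (measurable_gammaPDFReal a r).ennreal_ofReal
  rw [gammaMeasure, integral_withDensity_eq_integral_toReal_smul hmeas
    (ae_of_all _ fun _ ↦ ENNReal.ofReal_lt_top),
    ← integral_Ici_eq_integral_Ioi, setIntegral_eq_integral_of_forall_compl_eq_zero hzero]
  simp only [gammaPDF, ENNReal.toReal_ofReal (gammaPDFReal_nonneg ha hr _), smul_eq_mul]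

lemma integral_gammaMeasure (ha : 0 < a) (hr : 0 < r) (f : ℝ → ℝ) :
    ∫ x, f x ∂gammaMeasure a r =
      r ^ a / Gamma a * ∫ x in Ioi 0, x ^ (a - 1) * exp (-(r * x)) * f x := by
  rw [integral_gammaMeasure_eq_integral_gammaPDFReal ha hr, ← integral_const_mul]
  refine setIntegral_congr_fun measurableSet_Ioi fun x (hx : 0 < x) ↦ ?_
  simp only [gammaPDFReal, if_pos hx.le, mul_assoc]

lemma gammaMeasure_real_eq_setIntegral (ha : 0 < a) (hr : 0 < r) {S : Set ℝ}
    (hS : MeasurableSet S) :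
    (gammaMeasure a r).real S =
      r ^ a / Gamma a * ∫ x in Ioi 0 ∩ S, x ^ (a - 1) * exp (-(r * x)) := by
  rw [← integral_indicator_one hS, integral_gammaMeasure ha hr, ← setIntegral_indicator hS]
  congr 2 with x
  by_cases hx : x ∈ S <;> simp [hx]

lemma integral_rpow_mul_exp_neg_mul_gammaMeasure (ha : 0 < a) (hr : 0 < r) {s t : ℝ}
    (has : 0 < a + s) (hrt : 0 < r + t) :
    ∫ x, x ^ s * exp (-(t * x)) ∂gammaMeasure a r =
      r ^ a / Gamma a * (Gamma (a + s) / (r + t) ^ (a + s)) := by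
  have hkernel : ∀ x ∈ Ioi (0 : ℝ), x ^ (a - 1) * exp (-(r * x)) * (x ^ s * exp (-(t * x))) =
      x ^ (a + s - 1) * exp (-((r + t) * x)) := by
    intro x (hx : 0 < x)
    rw [mul_mul_mul_comm, ← rpow_add hx, ← exp_add]
    ring_nf
  rw [integral_gammaMeasure ha hr, setIntegral_congr_fun measurableSet_Ioi hkernel,
    integral_rpow_mul_exp_neg_mul_Ioi has hrt, one_div, inv_rpow hrt.le, inv_mul_eq_div]

lemma integral_exp_neg_mul_mul_gammaMeasure (ha : 0 < a) (hr : 0 < r) {t : ℝ} (hrt : 0 < r + t)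
    (f : ℝ → ℝ) :
    ∫ x, exp (-(t * x)) * f x ∂gammaMeasure a r =
      (r / (r + t)) ^ a * ∫ x, f x ∂gammaMeasure a (r + t) := by
  have hkernel : ∀ x : ℝ, x ^ (a - 1) * exp (-(r * x)) * (exp (-(t * x)) * f x) =
      x ^ (a - 1) * exp (-((r + t) * x)) * f x := by
    intro x
    rw [add_mul, neg_add, exp_add]
    ring
  simp_rw [integral_gammaMeasure ha hr, integral_gammaMeasure ha hrt, hkernel]
  rw [div_rpow hr.le hrt.le]
  field_simp

end GammaMeasure

section GammaCDF

variable {s r m c x : ℝ}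

lemma cdf_gammaMeasure_eq_rpow_mul_integral (hs : 0 < s) (hr : 0 < r) (hx : 0 < x) :
    cdf (gammaMeasure s r) x =
      r ^ s / Gamma s * (x ^ s * ∫ v in Ioc (0 : ℝ) 1, v ^ (s - 1) * exp (-(r * x * v))) := by
  have := isProbabilityMeasure_gammaMeasure hs hr
  have hscale := intervalIntegral.mul_integral_comp_mul_left (a := 0) (b := 1)
    (f := fun t ↦ t ^ (s - 1) * exp (-(r * t))) (c := x)
  have hkernel : ∀ v ∈ Ioc (0 : ℝ) 1, (x * v) ^ (s - 1) * exp (-(r * (x * v))) =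
      x ^ (s - 1) * (v ^ (s - 1) * exp (-(r * x * v))) := by
    intro v hv
    rw [mul_rpow hx.le hv.1.le, mul_assoc, mul_assoc r]
  rw [mul_zero, mul_one, intervalIntegral.integral_of_le zero_le_one,
    setIntegral_congr_fun measurableSet_Ioc hkernel, integral_const_mul, ← mul_assoc,
    rpow_sub_one hx.ne', mul_div_cancel₀ _ hx.ne'] at hscale
  rw [cdf_eq_real, gammaMeasure_real_eq_setIntegral hs hr measurableSet_Iic, Ioi_inter_Iic,
    ← intervalIntegral.integral_of_le hx.le, ← hscale]

lemma one_sub_cdf_gammaMeasure (hs : 0 < s) (hr : 0 < r) (hx : 0 ≤ x) :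
    1 - cdf (gammaMeasure s r) x =
      r ^ s / Gamma s * ∫ t in Ioi x, t ^ (s - 1) * exp (-(r * t)) := by
  have := isProbabilityMeasure_gammaMeasure hs hr
  rw [cdf_eq_real, ← probReal_compl_eq_one_sub measurableSet_Iic, compl_Iic,
    gammaMeasure_real_eq_setIntegral hs hr measurableSet_Ioi, Ioi_inter_Ioi, max_eq_right hx]

lemma integrable_cdf (μ ν : Measure ℝ) [IsFiniteMeasure ν] : Integrable (cdf μ) ν :=
  .of_bound (monotone_cdf μ).measurable.aestronglyMeasurable 1 (ae_of_all _ fun x ↦ by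
    rw [Real.norm_of_nonneg (cdf_nonneg μ x)]
    exact cdf_le_one μ x)

lemma integral_cdf_gammaMeasure_eq_integral_Ioc {μ : Measure ℝ} [IsFiniteMeasure μ]
    (hμ : ∀ᵐ x ∂μ, 0 < x) (hs : 0 < s) (hr : 0 < r) :
    ∫ x, cdf (gammaMeasure s r) x ∂μ =
      r ^ s / Gamma s *
        ∫ v in Ioc (0 : ℝ) 1, v ^ (s - 1) * ∫ x, x ^ s * exp (-(r * v * x)) ∂μ := by
  have hcdf : cdf (gammaMeasure s r) =ᵐ[μ] fun x ↦
      r ^ s / Gamma s * (x ^ s * ∫ v in Ioc (0 : ℝ) 1, v ^ (s - 1) * exp (-(r * x * v))) := by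
    filter_upwards [hμ] with x hx
    exact cdf_gammaMeasure_eq_rpow_mul_integral hs hr hx
  have hint : Integrable (fun x ↦ x ^ s * ∫ v in Ioc (0 : ℝ) 1, v ^ (s - 1) * exp (-(r * x * v)))
      μ := by
    have hcoeff : r ^ s / Gamma s ≠ 0 := by have := Gamma_pos_of_pos hs; positivity
    exact (integrable_const_mul_iff hcoeff.isUnit _).1 ((integrable_cdf _ _).congr hcdf)
  have hswap := integral_mul_integral_swap_of_nonneg (ν := volume.restrict (Ioc 0 1))
    (g := fun x ↦ x ^ s) (k := fun x v ↦ v ^ (s - 1) * exp (-(r * x * v)))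
    (by fun_prop) (by unfold Function.uncurry; fun_prop)
    (ae_of_all _ fun x ↦ (ae_restrict_mem measurableSet_Ioc).mono fun v hv ↦
      mul_nonneg (rpow_nonneg hv.1.le _) (exp_pos _).le)
    (hμ.mono fun x hx ↦
      (integrableOn_rpow_mul_exp_neg_mul hs (mul_pos hr hx)).mono_set Ioc_subset_Ioi_self)
    hint
  rw [integral_congr_ae hcdf, integral_const_mul, hswap]
  simp_rw [← integral_const_mul, mul_left_comm (_ ^ s), mul_right_comm r]

lemma integral_cdf_gammaMeasure (hs : 0 < s) (hr : 0 < r) (hm : 0 < m) (hc : 0 < c) :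
    ∫ x, cdf (gammaMeasure s r) x ∂gammaMeasure m c = regIncBeta (r / (r + c)) s m := by
  have := isProbabilityMeasure_gammaMeasure hm hc
  have hmoment : ∀ v ∈ Ioc (0 : ℝ) 1,
      v ^ (s - 1) * ∫ x, x ^ s * exp (-(r * v * x)) ∂gammaMeasure m c =
        c ^ m / Gamma m * Gamma (s + m) * (v ^ (s - 1) / (r * v + c) ^ (s + m)) := by
    intro v hv
    have hv0 := hv.1
    rw [integral_rpow_mul_exp_neg_mul_gammaMeasure hm hc (by positivity) (by positivity),
      add_comm m s, add_comm c]
    ring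
  rw [integral_cdf_gammaMeasure_eq_integral_Ioc ae_gammaMeasure_pos hs hr,
    setIntegral_congr_fun measurableSet_Ioc hmoment, integral_const_mul, regIncBeta,
    incBeta_one hs hm, incBeta_div_add hr hc, beta]
  field_simp

lemma integral_one_sub_cdf_gammaMeasure (hs : 0 < s) (hr : 0 < r) (hm : 0 < m) (hc : 0 < c) :
    ∫ x, (1 - cdf (gammaMeasure s r) x) ∂gammaMeasure m c = regIncBeta (c / (r + c)) m s := by
  have := isProbabilityMeasure_gammaMeasure hm hc
  have hmem : r / (r + c) ∈ Icc 0 1 :=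
    ⟨by positivity, div_le_one_of_le₀ (by linarith) (by positivity)⟩
  have hcompl : c / (r + c) = 1 - r / (r + c) := by field_simp; ring
  rw [hcompl, regIncBeta_one_sub hs hm hmem, ← integral_cdf_gammaMeasure hs hr hm hc,
    integral_sub (integrable_const _) (integrable_cdf _ _), integral_const, probReal_univ, one_smul]

lemma integral_rpow_neg_mul_exp_neg_mul_Ioi (hs : s < 1) (hx : 0 < x) :
    ∫ p in Ioi (0 : ℝ), p ^ (-s) * exp (-(x * p)) = Gamma (1 - s) * x ^ (s - 1) := by
  have := integral_rpow_mul_exp_neg_mul_Ioi (sub_pos.2 hs) hx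
  rwa [sub_sub_cancel_left, one_div, inv_rpow hx.le, ← rpow_neg hx.le, neg_sub, mul_comm] at this

lemma integral_exp_neg_mul_mul_exp_neg_mul_mul_Ioi {p : ℝ} (hr : 0 < r) (hp : 0 < 1 + p) :
    ∫ t in Ioi x, exp (-(r * t)) * exp (-(r * t * p)) =
      exp (-(r * (1 + p) * x)) / (r * (1 + p)) := by
  have hexp : ∀ t : ℝ, exp (-(r * t)) * exp (-(r * t * p)) = exp (-(r * (1 + p)) * t) := by
    intro t
    rw [← exp_add]
    ring_nf
  simp_rw [hexp]
  rw [integral_exp_mul_Ioi (neg_neg_of_pos (mul_pos hr hp)), neg_div_neg_eq, neg_mul]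

lemma integral_rpow_neg_div_one_add_mul_exp_neg_mul (hs : s ∈ Ioo 0 1) (hr : 0 < r) (hx : 0 < x) :
    ∫ p in Ioi (0 : ℝ), p ^ (-s) / (1 + p) * exp (-(r * (1 + p) * x)) =
      Gamma (1 - s) * (r ^ s * ∫ t in Ioi x, t ^ (s - 1) * exp (-(r * t))) := by
  have hlaplace : EqOn (fun t ↦ exp (-(r * t)) * ∫ p in Ioi (0 : ℝ), p ^ (-s) * exp (-(r * t * p)))
      (fun t ↦ Gamma (1 - s) * r ^ (s - 1) * (t ^ (s - 1) * exp (-(r * t)))) (Ioi x) := by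
    intro t ht
    have ht0 : 0 < t := hx.trans ht
    simp only
    rw [integral_rpow_neg_mul_exp_neg_mul_Ioi hs.2 (mul_pos hr ht0), mul_rpow hr.le ht0.le]
    ring
  have hint : IntegrableOn (fun t ↦ t ^ (s - 1) * exp (-(r * t))) (Ioi x) :=
    (integrableOn_rpow_mul_exp_neg_mul hs.1 hr).mono_set (Ioi_subset_Ioi hx.le)
  have hkint : ∀ t ∈ Ioi x, IntegrableOn (fun p : ℝ ↦ p ^ (-s) * exp (-(r * t * p))) (Ioi 0) := by
    intro t ht
    simpa using integrableOn_rpow_mul_exp_neg_mul (sub_pos.2 hs.2) (mul_pos hr (hx.trans ht))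
  have hswap := integral_mul_integral_swap_of_nonneg (μ := volume.restrict (Ioi x))
    (ν := volume.restrict (Ioi 0)) (g := fun t ↦ exp (-(r * t)))
    (k := fun t p ↦ p ^ (-s) * exp (-(r * t * p)))
    (by fun_prop) (by unfold Function.uncurry; fun_prop)
    (ae_of_all _ fun t ↦ (ae_restrict_mem measurableSet_Ioi).mono fun p (hp : 0 < p) ↦
      mul_nonneg (rpow_nonneg hp.le _) (exp_pos _).le)
    ((ae_restrict_mem measurableSet_Ioi).mono hkint)
    (IntegrableOn.congr_fun (hint.const_mul _) hlaplace.symm measurableSet_Ioi)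
  have hinner : ∀ p ∈ Ioi (0 : ℝ),
      ∫ t in Ioi x, exp (-(r * t)) * (p ^ (-s) * exp (-(r * t * p))) =
        r⁻¹ * (p ^ (-s) / (1 + p) * exp (-(r * (1 + p) * x))) := by
    intro p (hp : 0 < p)
    simp_rw [mul_left_comm (exp _)]
    rw [integral_const_mul, integral_exp_neg_mul_mul_exp_neg_mul_mul_Ioi hr (by linarith)]
    field_simp
  rw [setIntegral_congr_fun measurableSet_Ioi hlaplace, integral_const_mul,
    setIntegral_congr_fun measurableSet_Ioi hinner, integral_const_mul,
    rpow_sub_one hr.ne'] at hswap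
  exact mul_left_cancel₀ (inv_ne_zero hr.ne') (hswap.symm.trans (by ring))

lemma sin_pi_mul_pos (hs : s ∈ Ioo 0 1) : 0 < sin (π * s) :=
  sin_pos_of_pos_of_lt_pi (mul_pos pi_pos hs.1) (mul_lt_of_lt_one_right pi_pos hs.2)

lemma sin_pi_mul_div_pi_mul_Gamma_one_sub (hs : s ∈ Ioo 0 1) :
    sin (π * s) / π * Gamma (1 - s) = (Gamma s)⁻¹ := by
  refine eq_inv_of_mul_eq_one_right ?_
  rw [mul_left_comm, Gamma_mul_Gamma_one_sub, div_mul_div_cancel₀' (sin_pi_mul_pos hs).ne',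
    div_self pi_ne_zero]

lemma one_sub_cdf_gammaMeasure_eq_integral_exp (hs : s ∈ Ioo 0 1) (hr : 0 < r) (hx : 0 < x) :
    1 - cdf (gammaMeasure s r) x =
      sin (π * s) / π * ∫ p in Ioi (0 : ℝ), p ^ (-s) / (1 + p) * exp (-(r * (1 + p) * x)) := by
  rw [one_sub_cdf_gammaMeasure hs.1 hr hx.le,
    integral_rpow_neg_div_one_add_mul_exp_neg_mul hs hr hx,
    ← mul_assoc, sin_pi_mul_div_pi_mul_Gamma_one_sub hs, ← mul_assoc, div_eq_inv_mul]

lemma integrableOn_rpow_neg_div_one_add_mul_exp_neg_mul (hs : s < 1) (hr : 0 < r) (hx : 0 < x) :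
    IntegrableOn (fun p : ℝ ↦ p ^ (-s) / (1 + p) * exp (-(r * (1 + p) * x))) (Ioi 0) := by
  have hdom : IntegrableOn (fun p : ℝ ↦ p ^ (-s) * exp (-(r * x * p))) (Ioi 0) := by
    simpa using integrableOn_rpow_mul_exp_neg_mul (sub_pos.2 hs) (mul_pos hr hx)
  refine hdom.mono' (by fun_prop)
    ((ae_restrict_mem measurableSet_Ioi).mono fun p (hp : 0 < p) ↦ ?_)
  have hrx := mul_pos hr hx
  rw [Real.norm_of_nonneg (by positivity)]
  exact mul_le_mul (div_le_self (by positivity) (by linarith)) (exp_le_exp.2 (by linarith))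
    (by positivity) (by positivity)

lemma integral_one_sub_cdf_gammaMeasure_mul {μ : Measure ℝ} [SFinite μ]
    (hμ : ∀ᵐ x ∂μ, 0 < x) (hs : s ∈ Ioo 0 1) (hr : 0 < r) {g : ℝ → ℝ} (hg : Integrable g μ) :
    ∫ x, (1 - cdf (gammaMeasure s r) x) * g x ∂μ =
      sin (π * s) / π *
        ∫ p in Ioi (0 : ℝ), p ^ (-s) / (1 + p) * ∫ x, exp (-(r * (1 + p) * x)) * g x ∂μ := by
  have hcdf : (fun x ↦ (1 - cdf (gammaMeasure s r) x) * g x) =ᵐ[μ] fun x ↦ sin (π * s) / π *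
      (g x * ∫ p in Ioi (0 : ℝ), p ^ (-s) / (1 + p) * exp (-(r * (1 + p) * x))) := by
    filter_upwards [hμ] with x hx
    rw [one_sub_cdf_gammaMeasure_eq_integral_exp hs hr hx]
    ring
  have hbdd : Integrable (fun x ↦ (1 - cdf (gammaMeasure s r) x) * g x) μ := by
    refine hg.bdd_mul (c := 1)
      ((monotone_cdf _).measurable.const_sub 1).aestronglyMeasurable (ae_of_all _ fun x ↦ ?_)
    rw [Real.norm_of_nonneg (sub_nonneg.2 (cdf_le_one _ x))]
    exact sub_le_self _ (cdf_nonneg _ x)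
  have hcoeff : sin (π * s) / π ≠ 0 := (div_pos (sin_pi_mul_pos hs) pi_pos).ne'
  have hswap := integral_mul_integral_swap_of_nonneg (ν := volume.restrict (Ioi 0))
    (k := fun x p ↦ p ^ (-s) / (1 + p) * exp (-(r * (1 + p) * x)))
    hg.aestronglyMeasurable (by unfold Function.uncurry; fun_prop)
    (ae_of_all _ fun x ↦ (ae_restrict_mem measurableSet_Ioi).mono fun p (hp : 0 < p) ↦ by
      simp only [Pi.zero_apply]; positivity)
    (hμ.mono fun x hx ↦ integrableOn_rpow_neg_div_one_add_mul_exp_neg_mul hs.2 hr hx)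
    ((integrable_const_mul_iff hcoeff.isUnit _).1 (hbdd.congr hcdf))
  rw [integral_congr_ae hcdf, integral_const_mul, hswap]
  simp_rw [← integral_const_mul, mul_left_comm (g _), mul_comm (g _)]

lemma integral_exp_neg_mul_mul_cdf_gammaMeasure (hs : 0 < s) (hr : 0 < r) (hm : 0 < m)
    (hc : 0 < c) {t : ℝ} (hct : 0 < c + t) :
    ∫ x, exp (-(t * x)) * cdf (gammaMeasure s r) x ∂gammaMeasure m c =
      (c / (c + t)) ^ m * regIncBeta (r / (r + (c + t))) s m := by
  rw [integral_exp_neg_mul_mul_gammaMeasure hm hc hct, integral_cdf_gammaMeasure hs hr hm hct]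

lemma integral_one_sub_cdf_gammaMeasure_mul_cdf (hs : s ∈ Ioo 0 1) (hr : 0 < r) (hm : 0 < m)
    (hc : 0 < c) :
    ∫ x, (1 - cdf (gammaMeasure s r) x) * cdf (gammaMeasure s r) x ∂gammaMeasure m c =
      sin (π * s) / π * ((c / r) ^ m * ∫ p in Ioi (0 : ℝ),
        regIncBeta (1 / (c / r + 2 + p)) s m / (p ^ s * (1 + p) * (c / r + 1 + p) ^ m)) := by
  have := isProbabilityMeasure_gammaMeasure hm hc
  rw [integral_one_sub_cdf_gammaMeasure_mul ae_gammaMeasure_pos hs hr (integrable_cdf _ _),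
    ← integral_const_mul ((c / r) ^ m)]
  congr 1
  refine setIntegral_congr_fun measurableSet_Ioi fun p (hp : 0 < p) ↦ ?_
  have hratio : c / (c + r * (1 + p)) = c / r / (c / r + 1 + p) := by field_simp; ring
  have harg : r / (r + (c + r * (1 + p))) = 1 / (c / r + 2 + p) := by field_simp; ring
  simp only [integral_exp_neg_mul_mul_cdf_gammaMeasure hs.1 hr hm hc
    (by positivity : 0 < c + r * (1 + p))]
  rw [hratio, harg, div_rpow (by positivity) (by positivity), rpow_neg hp.le]
  field_simp

theorem integral_one_sub_cdf_gammaMeasure_sq (hs : s ∈ Ioo 0 1) (hr : 0 < r) (hm : 0 < m)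
    (hc : 0 < c) :
    ∫ x, (1 - cdf (gammaMeasure s r) x) ^ 2 ∂gammaMeasure m c =
      regIncBeta (c / (r + c)) m s - sin (π * s) / π * ((c / r) ^ m * ∫ p in Ioi (0 : ℝ),
        regIncBeta (1 / (c / r + 2 + p)) s m / (p ^ s * (1 + p) * (c / r + 1 + p) ^ m)) := by
  have := isProbabilityMeasure_gammaMeasure hm hc
  set F := cdf (gammaMeasure s r)
  have hF : Integrable F (gammaMeasure m c) := integrable_cdf _ _
  have hsurv : Integrable (fun x ↦ 1 - F x) (gammaMeasure m c) := (integrable_const 1).sub hF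
  have hprod : Integrable (fun x ↦ (1 - F x) * F x) (gammaMeasure m c) :=
    hsurv.mul_bdd (c := 1) hF.aestronglyMeasurable (ae_of_all _ fun x ↦ by
      rw [Real.norm_of_nonneg (cdf_nonneg _ x)]
      exact cdf_le_one _ x)
  calc ∫ x, (1 - F x) ^ 2 ∂gammaMeasure m c
    _ = ∫ x, ((1 - F x) - (1 - F x) * F x) ∂gammaMeasure m c := by congr with x; ring
    _ = ∫ x, (1 - F x) ∂gammaMeasure m c - ∫ x, (1 - F x) * F x ∂gammaMeasure m c :=
      integral_sub hsurv hprod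
    _ = _ := by
      rw [integral_one_sub_cdf_gammaMeasure hs.1 hr hm hc,
        integral_one_sub_cdf_gammaMeasure_mul_cdf hs hr hm hc]

end GammaCDF

section Nakagami

variable {m γbar α γ : ℝ}

lemma integral_exp_neg_mul_sq_Ioi_sqrt (hγ : 0 ≤ γ) :
    ∫ z in Ioi √γ, exp (-(α * z ^ 2)) =
      1 / 2 * ∫ t in Ioi γ, t ^ ((1 : ℝ) / 2 - 1) * exp (-(α * t)) := by
  have hsubst := integral_comp_rpow_Ioi_of_pos' (g := fun z ↦ exp (-(α * z ^ 2)))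
    (half_pos (zero_lt_one' ℝ)) (sqrt_nonneg γ)
  have hsq : √γ ^ (1 / 2 : ℝ)⁻¹ = γ := by
    rw [sqrt_eq_rpow, rpow_rpow_inv hγ (by norm_num)]
  rw [← hsubst, hsq, ← integral_const_mul]
  refine setIntegral_congr_fun measurableSet_Ioi fun t ht ↦ ?_
  simp only [← sqrt_eq_rpow, sq_sqrt (hγ.trans ht.le), smul_eq_mul, mul_assoc]

lemma gaussQ_sqrt_two_mul (hα : 0 < α) (hγ : 0 ≤ γ) :
    gaussQ √(2 * α * γ) = (1 - cdf (gammaMeasure (1 / 2) α) γ) / 2 := by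
  have hscale := integral_comp_mul_left_Ioi (fun z ↦ exp (-z ^ 2 / 2)) √γ
    (sqrt_pos.2 (mul_pos two_pos hα))
  have hexp : ∀ z : ℝ, exp (-(√(2 * α) * z) ^ 2 / 2) = exp (-(α * z ^ 2)) := by
    intro z
    rw [mul_pow, sq_sqrt (by positivity)]
    ring_nf
  simp_rw [hexp] at hscale
  rw [integral_exp_neg_mul_sq_Ioi_sqrt hγ, ← sqrt_mul (by positivity), smul_eq_mul,
    eq_inv_mul_iff_mul_eq₀ (by positivity)] at hscale
  rw [one_sub_cdf_gammaMeasure one_half_pos hα hγ, Gamma_one_half_eq, ← sqrt_eq_rpow, gaussQ,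
    ← hscale, sqrt_mul zero_le_two, sqrt_mul zero_le_two]
  field_simp

lemma integral_mul_nakagamiPdf (hm : 0 < m) (hγ : 0 < γbar) (f : ℝ → ℝ) :
    ∫ γ in Ioi 0, f γ * nakagamiPdf m γbar γ = ∫ γ, f γ ∂gammaMeasure m (m / γbar) := by
  rw [integral_gammaMeasure hm (div_pos hm hγ), ← integral_const_mul]
  congr with γ
  rw [nakagamiPdf, neg_mul, neg_div, mul_div_right_comm m γ]
  ring

end Nakagami

theorem lemma3_avg_Qsq_nakagami (m γbar α : ℝ) (hm : 0 < m) (hγ : 0 < γbar) (hα : 0 < α) :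
    ∫ γ in Set.Ioi (0:ℝ), gaussQ (Real.sqrt (2 * α * γ)) ^ 2 * nakagamiPdf m γbar γ =
      (1 / 4) * regIncBeta (m / (m + α * γbar)) m (1 / 2) -
        ((m / (α * γbar)) ^ m / (4 * Real.pi)) *
          ∫ p in Set.Ioi (0:ℝ),
            regIncBeta (1 / (m / (α * γbar) + 2 + p)) (1 / 2) m /
              (Real.sqrt p * (1 + p) * (m / (α * γbar) + 1 + p) ^ m) := by
  have hQ : ∀ γ ∈ Ioi (0 : ℝ), gaussQ √(2 * α * γ) ^ 2 * nakagamiPdf m γbar γ =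
      1 / 4 * ((1 - cdf (gammaMeasure (1 / 2) α) γ) ^ 2 * nakagamiPdf m γbar γ) := fun γ hγ0 ↦ by
    rw [gaussQ_sqrt_two_mul hα hγ0.le]
    ring
  have harg : m / γbar / (α + m / γbar) = m / (m + α * γbar) := by field_simp; ring
  have hratio : m / γbar / α = m / (α * γbar) := by rw [div_div, mul_comm]
  rw [setIntegral_congr_fun measurableSet_Ioi hQ, integral_const_mul,
    integral_mul_nakagamiPdf hm hγ,
    integral_one_sub_cdf_gammaMeasure_sq (by norm_num) hα hm (div_pos hm hγ), harg, hratio,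
    mul_one_div, sin_pi_div_two]
  simp_rw [← sqrt_eq_rpow]
  ring
end

section
/- For b > 0 and m > 0, the integral R₂ = (b^m/(4π)) ∫₀^∞ I_{1/(b+2+p)}(1/2, m)/(√p(1+p)(b+1+p)^m) dp equals (b^m/(4π)) Σ_{n=0}^∞ [(1-m)_n B(n+m+1, 1/2) / (n! (n+1/2) B(1/2, m))] · F₁(n+m+1, m, n+1/2; m+n+3/2; −b, −(1+b)), where F₁ is the Appell hypergeometric function of the first kind (defined for these negative arguments by its Euler integral representation). -/
open MeasureTheory Real Set

noncomputable def poch (a : ℝ) (n : ℕ) : ℝ := ∏ i ∈ Finset.range n, (a + i)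

/-- Appell F₁ defined by its Euler integral representation (valid for γ > α > 0, x,y < 1). -/
noncomputable def appellF1 (α β β' γ x y : ℝ) : ℝ :=
  (incBeta 1 α (γ - α))⁻¹ *
    ∫ t in (0:ℝ)..1,
      t ^ (α - 1) * (1 - t) ^ (γ - α - 1) * (1 - x * t) ^ (-β) * (1 - y * t) ^ (-β')

/-!
Integrating the binomial series of `(1 - s) ^ (m - 1)` against `s ^ (-1/2)` expands the incomplete
beta function at `1 / (b + 2 + p)` in powers of that argument, which stays below `1 / (b + 2) < 1`.
This gives a summable dominating series on the half-line, so the expansion may be integrated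
termwise in `p`. The substitution `t = 1 / (1 + p)` turns every term into an Euler integral of an
Appell function: `1 - x + p` becomes `(1 - x t) / t`, and all powers of `t` collect into
`t ^ (α - 1)`.
-/

lemma poch_eq_ascPochhammer_eval (a : ℝ) (n : ℕ) : poch a n = (ascPochhammer ℝ n).eval a := by
  induction n with
  | zero => simp [poch]
  | succ n ih => rw [ascPochhammer_succ_eval, ← ih, poch, poch, Finset.prod_range_succ]

lemma ringChoose_eq_poch_div_factorial (a : ℝ) (n : ℕ) :
    Ring.choose (a + n - 1) n = poch a n / n.factorial := by
  rw [← Ring.multichoose_eq, eq_div_iff (by positivity), mul_comm, ← nsmul_eq_mul,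
    Ring.factorial_nsmul_multichoose_eq_ascPochhammer, Polynomial.ascPochhammer_smeval_eq_eval,
    poch_eq_ascPochhammer_eval]

lemma hasSum_poch_div_factorial_mul_pow (a : ℝ) {s : ℝ} (hs : |s| < 1) :
    HasSum (fun n : ℕ => poch a n / n.factorial * s ^ n) ((1 - s) ^ (-a)) := by
  have binomial := (one_div_one_sub_rpow_hasFPowerSeriesOnBall_zero a).hasSum (y := s)
    (by simpa [enorm_eq_nnnorm, ← NNReal.coe_lt_coe] using hs)
  rw [zero_add, one_div, ← rpow_neg (by linarith [(abs_lt.mp hs).2])] at binomial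
  exact binomial.congr_fun fun n => by
    simp [FormalMultilinearSeries.ofScalars, ringChoose_eq_poch_div_factorial]

lemma hasSum_integral_mul_pow_mul {Ω 𝕜 : Type*} [MeasurableSpace Ω] {μ : Measure Ω} [RCLike 𝕜]
    {c : ℕ → 𝕜} {u g f : Ω → 𝕜} {r : ℝ} (hc : Summable fun n => ‖c n‖ * r ^ n)
    (hu : AEStronglyMeasurable u μ) (hur : ∀ᵐ ω ∂μ, ‖u ω‖ ≤ r) (hg : Integrable g μ)
    (hf : ∀ᵐ ω ∂μ, HasSum (fun n => c n * u ω ^ n * g ω) (f ω)) :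
    HasSum (fun n => ∫ ω, c n * u ω ^ n * g ω ∂μ) (∫ ω, f ω ∂μ) := by
  refine hasSum_integral_of_dominated_convergence (fun n ω => ‖c n‖ * r ^ n * ‖g ω‖)
    (fun n => ((hu.pow n).const_mul _).mul hg.aestronglyMeasurable) (fun n => ?_)
    (.of_forall fun ω => hc.mul_right _) ?_ hf
  · filter_upwards [hur] with ω hω
    rw [norm_mul, norm_mul, norm_pow]
    gcongr
  · simp_rw [tsum_mul_right]
    exact hg.norm.const_mul _

lemma integral_pow_mul_rpow_sub_one {a x : ℝ} (ha : 0 < a) (hx : 0 < x) (n : ℕ) :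
    ∫ s in Ioc 0 x, s ^ n * s ^ (a - 1) = x ^ n * x ^ a / (n + a) := by
  have merge : EqOn (fun s : ℝ => s ^ n * s ^ (a - 1)) (fun s => s ^ (n + a - 1)) (Ioc 0 x) :=
    fun s hs => by
      beta_reduce
      rw [← rpow_natCast, ← rpow_add hs.1, add_sub_assoc]
  have hna : 0 < n + a := by positivity
  rw [setIntegral_congr_fun measurableSet_Ioc merge, ← intervalIntegral.integral_of_le hx.le,
    integral_rpow (.inl (by linarith)), sub_add_cancel, zero_rpow hna.ne', sub_zero, rpow_add hx,
    rpow_natCast]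

lemma hasSum_incBeta {a x : ℝ} (c : ℝ) (ha : 0 < a) (hx₀ : 0 < x) (hx₁ : x < 1) :
    HasSum (fun n : ℕ => poch (1 - c) n / (n.factorial * (n + a)) * x ^ n * x ^ a)
      (incBeta x a c) := by
  have hx : |x| < 1 := by rwa [abs_of_pos hx₀]
  have coeff_summable : Summable fun n : ℕ => ‖poch (1 - c) n / n.factorial‖ * x ^ n := by
    simpa [abs_of_pos hx₀] using (hasSum_poch_div_factorial_mul_pow (1 - c) hx).summable.norm
  have power_integrable : IntegrableOn (fun s : ℝ => s ^ (a - 1)) (Ioc 0 x) :=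
    (intervalIntegrable_iff_integrableOn_Ioc_of_le hx₀.le).mp
      (intervalIntegral.intervalIntegrable_rpow' (by linarith))
  have termwise := hasSum_integral_mul_pow_mul (f := fun s => s ^ (a - 1) * (1 - s) ^ (c - 1))
    coeff_summable aestronglyMeasurable_id
    (ae_restrict_of_forall_mem measurableSet_Ioc fun s hs => by
      simpa [abs_of_pos hs.1] using hs.2) power_integrable
    (ae_restrict_of_forall_mem measurableSet_Ioc fun s hs => by
      have hs' : |s| < 1 := by rw [abs_of_pos hs.1]; exact hs.2.trans_lt hx₁
      simpa [mul_comm] using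
        (hasSum_poch_div_factorial_mul_pow (1 - c) hs').mul_right (s ^ (a - 1)))
  rw [incBeta, intervalIntegral.integral_of_le hx₀.le]
  refine termwise.congr_fun fun n => ?_
  simp_rw [mul_assoc]
  rw [integral_const_mul]
  simp only [id_eq]
  rw [integral_pow_mul_rpow_sub_one ha hx₀]
  field_simp

lemma integrableOn_rpow_mul_one_sub_rpow {a b : ℝ} (ha : 0 < a) (hb : 0 < b) :
    IntegrableOn (fun t : ℝ => t ^ (a - 1) * (1 - t) ^ (b - 1)) (Ioo 0 1) := by
  have complex_beta := (intervalIntegrable_iff_integrableOn_Ioo_of_le zero_le_one).mp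
    (Complex.betaIntegral_convergent (u := a) (v := b) (by simpa) (by simpa))
  refine IntegrableOn.congr_fun complex_beta.re (fun t ht => ?_) measurableSet_Ioo
  have h1t : 0 ≤ 1 - t := by linarith [ht.2]
  norm_cast
  rw [← Complex.ofReal_cpow ht.1.le, ← Complex.ofReal_cpow h1t]
  norm_cast

lemma incBeta_one_pos {a b : ℝ} (ha : 0 < a) (hb : 0 < b) : 0 < incBeta 1 a b :=
  intervalIntegral.intervalIntegral_pos_of_pos_on
    ((intervalIntegrable_iff_integrableOn_Ioo_of_le zero_le_one).mpr
      (integrableOn_rpow_mul_one_sub_rpow ha hb))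
    (fun _ ht => mul_pos (rpow_pos_of_pos ht.1 _) (rpow_pos_of_pos (sub_pos.mpr ht.2) _))
    zero_lt_one

lemma one_sub_mul_pos {x t : ℝ} (hx : x < 1) (ht : t ∈ Icc (0 : ℝ) 1) : 0 < 1 - x * t := by
  rcases le_total x 0 with h | h <;> nlinarith [ht.1, ht.2]

lemma image_inv_sub_one_Ioo : (fun t : ℝ => t⁻¹ - 1) '' Ioo 0 1 = Ioi 0 := by
  rw [← image_image (· - 1) (·⁻¹), image_inv_eq_inv, inv_Ioo_0_left zero_lt_one]
  simp

lemma hasDerivWithinAt_inv_sub_one (t : ℝ) (ht : t ∈ Ioo (0 : ℝ) 1) :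
    HasDerivWithinAt (fun t : ℝ => t⁻¹ - 1) (-(t ^ 2)⁻¹) (Ioo 0 1) t :=
  ((hasDerivAt_inv ht.1.ne').sub_const 1).hasDerivWithinAt

lemma injOn_inv_sub_one (s : Set ℝ) : InjOn (fun t : ℝ => t⁻¹ - 1) s :=
  (sub_left_injective.comp inv_injective).injOn

/-- The integrand of Euler's integral for the Appell function `F₁(α, β, β'; γ; x, y)`. -/
noncomputable def appellF1Integrand (α β β' γ x y t : ℝ) : ℝ :=
  t ^ (α - 1) * (1 - t) ^ (γ - α - 1) * (1 - x * t) ^ (-β) * (1 - y * t) ^ (-β')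

/-- The integrand of Euler's integral for `F₁(α, β, β'; γ; x, y)` transported to the half-line
`p > 0` by the substitution `t = 1 / (1 + p)`. -/
noncomputable def appellF1HalfLineIntegrand (α β β' γ x y p : ℝ) : ℝ :=
  p ^ (γ - α - 1) * (1 + p) ^ (β + β' - γ) * (1 - x + p) ^ (-β) * (1 - y + p) ^ (-β')

section AppellF1

variable {α β β' γ x y : ℝ}

lemma integrableOn_appellF1Integrand (hα : 0 < α) (hγ : α < γ) (hx : x < 1) (hy : y < 1) :
    IntegrableOn (appellF1Integrand α β β' γ x y) (Ioo 0 1) := by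
  have factor_continuous {z : ℝ} (hz : z < 1) (e : ℝ) :
      ContinuousOn (fun t : ℝ => (1 - z * t) ^ e) (Icc 0 1) :=
    ContinuousOn.rpow_const (by fun_prop) fun t ht => .inl (one_sub_mul_pos hz ht).ne'
  rw [← integrableOn_Icc_iff_integrableOn_Ioo]
  have beta_integrable := (integrableOn_Icc_iff_integrableOn_Ioo (μ := volume)).mpr
    (integrableOn_rpow_mul_one_sub_rpow hα (sub_pos.mpr hγ))
  exact (beta_integrable.mul_continuousOn (factor_continuous hx _) isCompact_Icc).mul_continuousOn
    (factor_continuous hy _) isCompact_Icc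

lemma integral_appellF1Integrand (hα : 0 < α) (hγ : α < γ) :
    ∫ t in Ioo 0 1, appellF1Integrand α β β' γ x y t =
      incBeta 1 α (γ - α) * appellF1 α β β' γ x y := by
  rw [appellF1, mul_inv_cancel_left₀ (incBeta_one_pos hα (sub_pos.mpr hγ)).ne',
    intervalIntegral.integral_of_le zero_le_one, integral_Ioc_eq_integral_Ioo]
  rfl

lemma abs_deriv_smul_appellF1HalfLineIntegrand (hx : x < 1) (hy : y < 1) {t : ℝ}
    (ht : t ∈ Ioo (0 : ℝ) 1) :
    |(-(t ^ 2)⁻¹)| • appellF1HalfLineIntegrand α β β' γ x y (t⁻¹ - 1) =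
      appellF1Integrand α β β' γ x y t := by
  have ht₀ : 0 < t := ht.1
  have shift (z : ℝ) : 1 - z + (t⁻¹ - 1) = (1 - z * t) / t := by field_simp; ring
  have gap : t⁻¹ - 1 = (1 - t) / t := by field_simp
  have one_sub_nonneg : 0 ≤ 1 - t := by linarith [ht.2]
  have power_split : t ^ (α - 1) = (t ^ 2)⁻¹ * (t ^ (γ - α - 1))⁻¹ * (t ^ (β + β' - γ))⁻¹ *
      (t ^ (-β))⁻¹ * (t ^ (-β'))⁻¹ := by
    simp only [← rpow_natCast, ← rpow_neg ht₀.le, ← rpow_add ht₀]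
    congr 1
    push_cast
    ring
  rw [abs_neg, abs_of_nonneg (by positivity), smul_eq_mul, appellF1HalfLineIntegrand, shift, shift,
    add_sub_cancel, gap, div_rpow one_sub_nonneg ht₀.le, inv_rpow ht₀.le,
    div_rpow (one_sub_mul_pos hx (Ioo_subset_Icc_self ht)).le ht₀.le,
    div_rpow (one_sub_mul_pos hy (Ioo_subset_Icc_self ht)).le ht₀.le, appellF1Integrand,
    power_split]
  ring

lemma integrableOn_appellF1HalfLineIntegrand (hα : 0 < α) (hγ : α < γ) (hx : x < 1)
    (hy : y < 1) : IntegrableOn (appellF1HalfLineIntegrand α β β' γ x y) (Ioi 0) := by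
  rw [← image_inv_sub_one_Ioo, integrableOn_image_iff_integrableOn_abs_deriv_smul
    measurableSet_Ioo hasDerivWithinAt_inv_sub_one (injOn_inv_sub_one _)]
  exact (integrableOn_appellF1Integrand hα hγ hx hy).congr_fun
    (fun t ht => (abs_deriv_smul_appellF1HalfLineIntegrand hx hy ht).symm) measurableSet_Ioo

lemma integral_appellF1HalfLineIntegrand (hα : 0 < α) (hγ : α < γ) (hx : x < 1) (hy : y < 1) :
    ∫ p in Ioi 0, appellF1HalfLineIntegrand α β β' γ x y p =
      incBeta 1 α (γ - α) * appellF1 α β β' γ x y := by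
  rw [← integral_appellF1Integrand hα hγ, ← image_inv_sub_one_Ioo,
    integral_image_eq_integral_abs_deriv_smul measurableSet_Ioo hasDerivWithinAt_inv_sub_one
      (injOn_inv_sub_one _)]
  exact setIntegral_congr_fun measurableSet_Ioo
    fun t ht => abs_deriv_smul_appellF1HalfLineIntegrand hx hy ht

lemma inv_pow_mul_appellF1HalfLineIntegrand (n : ℕ) {p : ℝ} (hp : 0 < 1 - y + p) :
    (1 - y + p)⁻¹ ^ n * appellF1HalfLineIntegrand α β β' γ x y p =
      appellF1HalfLineIntegrand (n + α) β (n + β') (n + γ) x y p := by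
  rw [appellF1HalfLineIntegrand, appellF1HalfLineIntegrand, neg_add, rpow_add hp, rpow_neg hp.le n,
    rpow_natCast, inv_pow, add_sub_add_left_eq_sub, add_left_comm β, add_sub_add_left_eq_sub]
  ring

lemma hasSum_integral_incBeta_mul {a : ℝ} (c : ℝ) (ha : 0 < a) (hα : 0 < α) (hγ : α < γ)
    (hx : x < 1) (hy : y < 0) :
    HasSum (fun n : ℕ => poch (1 - c) n / (n.factorial * (n + a)) *
        (incBeta 1 (n + α) (γ - α) * appellF1 (n + α) β (n + a) (n + γ) x y))
      (∫ p in Ioi 0, incBeta (1 - y + p)⁻¹ a c *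
        (p ^ (γ - α - 1) * (1 + p) ^ (β + a - γ) * (1 - x + p) ^ (-β))) := by
  have base_gt_one {p : ℝ} (hp : p ∈ Ioi (0 : ℝ)) : 1 < 1 - y + p := by
    linarith [mem_Ioi.mp hp]
  set r : ℝ := (1 - y)⁻¹ with hr
  have hr₀ : 0 < r := inv_pos.mpr (by linarith)
  have coeff_summable :
      Summable fun n : ℕ => ‖poch (1 - c) n / (n.factorial * (n + a))‖ * r ^ n := by
    have series := (hasSum_incBeta c ha hr₀ (inv_lt_one_of_one_lt₀ (by linarith))).summable
    rw [summable_mul_right_iff (rpow_pos_of_pos hr₀ a).ne'] at series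
    simpa only [norm_mul, norm_pow, norm_of_nonneg hr₀.le] using series.norm
  have termwise := hasSum_integral_mul_pow_mul (u := fun p : ℝ => (1 - y + p)⁻¹)
    (f := fun p => incBeta (1 - y + p)⁻¹ a c *
      (p ^ (γ - α - 1) * (1 + p) ^ (β + a - γ) * (1 - x + p) ^ (-β)))
    coeff_summable (Measurable.aestronglyMeasurable (by fun_prop))
    (ae_restrict_of_forall_mem measurableSet_Ioi fun p hp => by
      rw [norm_of_nonneg (inv_nonneg.mpr (zero_le_one.trans (base_gt_one hp).le)), hr]
      exact inv_anti₀ (by linarith) (by linarith [mem_Ioi.mp hp]))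
    (integrableOn_appellF1HalfLineIntegrand (β := β) (β' := a) hα hγ hx (hy.trans zero_lt_one))
    (ae_restrict_of_forall_mem measurableSet_Ioi fun p hp => by
      have hq := zero_lt_one.trans (base_gt_one hp)
      refine ((hasSum_incBeta c ha (inv_pos.mpr hq)
        (inv_lt_one_of_one_lt₀ (base_gt_one hp))).mul_right _).congr_fun fun n => ?_
      rw [appellF1HalfLineIntegrand, inv_rpow hq.le, rpow_neg hq.le]
      ring)
  refine termwise.congr_fun fun n => ?_
  have hγα : (n + γ) - (n + α) = γ - α := add_sub_add_left_eq_sub ..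
  simp_rw [mul_assoc]
  rw [integral_const_mul, setIntegral_congr_fun measurableSet_Ioi fun p hp =>
    inv_pow_mul_appellF1HalfLineIntegrand n (zero_lt_one.trans (base_gt_one hp)),
    integral_appellF1HalfLineIntegrand (by positivity) (by linarith) hx (hy.trans zero_lt_one), hγα]

end AppellF1

theorem R2_series_expansion_general (b m : ℝ) (hb : -1 < b) (hm : 0 < m) :
    HasSum (fun n : ℕ =>
        poch (1 - m) n * incBeta 1 ((n : ℝ) + m + 1) (1 / 2) /
            ((Nat.factorial n) * ((n : ℝ) + 1 / 2) * incBeta 1 (1 / 2) m) *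
          appellF1 ((n : ℝ) + m + 1) m ((n : ℝ) + 1 / 2) (m + (n : ℝ) + 3 / 2)
            (-b) (-(1 + b)))
      (∫ p in Set.Ioi (0:ℝ),
        regIncBeta (1 / (b + 2 + p)) (1 / 2) m /
          (Real.sqrt p * (1 + p) * (b + 1 + p) ^ m)) := by
  have incBeta_series := hasSum_integral_incBeta_mul (a := 1 / 2) (α := m + 1) (β := m)
    (γ := m + 3 / 2) (x := -b) (y := -(1 + b)) m one_half_pos (by linarith) (by linarith)
    (by linarith) (by linarith)
  convert! incBeta_series.div_const (incBeta 1 (1 / 2) m) using 1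
  · funext n
    have hδ : m + 3 / 2 - (m + 1) = 1 / 2 := by ring
    have hγn : m + (n : ℝ) + 3 / 2 = n + (m + 3 / 2) := by ring
    have hB : incBeta 1 (1 / 2) m ≠ 0 := (incBeta_one_pos one_half_pos hm).ne'
    rw [hδ, hγn, add_assoc]
    field_simp
  · rw [← integral_div]
    refine setIntegral_congr_fun measurableSet_Ioi fun p hp => ?_
    have hp₀ : 0 < p := hp
    have hsqrt : m + 3 / 2 - (m + 1) - 1 = -(1 / 2) := by ring
    have hinv : m + 1 / 2 - (m + 3 / 2) = -1 := by ring
    have hx : 1 - -b + p = b + 1 + p := by ring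
    have hy : 1 - -(1 + b) + p = b + 2 + p := by ring
    rw [hsqrt, hinv, hx, hy, rpow_neg hp₀.le, rpow_neg_one, rpow_neg (by linarith), regIncBeta,
      sqrt_eq_rpow, one_div (b + 2 + p)]
    simp only [div_eq_mul_inv, mul_inv]
    ring

theorem R2_series_expansion (b m : ℝ) (hb : 0 < b) (hm : 0 < m) :
    (b ^ m / (4 * Real.pi)) *
        (∫ p in Set.Ioi (0:ℝ),
          regIncBeta (1 / (b + 2 + p)) (1 / 2) m /
            (Real.sqrt p * (1 + p) * (b + 1 + p) ^ m)) =
      (b ^ m / (4 * Real.pi)) *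
        ∑' n : ℕ,
          poch (1 - m) n * incBeta 1 ((n : ℝ) + m + 1) (1 / 2) /
              ((Nat.factorial n) * ((n : ℝ) + 1 / 2) * incBeta 1 (1 / 2) m) *
            appellF1 ((n : ℝ) + m + 1) m ((n : ℝ) + 1 / 2) (m + (n : ℝ) + 3 / 2)
              (-b) (-(1 + b)) := by
  rw [(R2_series_expansion_general b m (by linarith) hm).tsum_eq]
end
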